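/- arXiv:1706.00564 — 3 statements merged into one kernel-verified Lean document; each statement's English description precedes it below -/
import Mathlib

section
/- Let n ≥ 3 and let a : ℤ/nℤ → ℤ be a function with a_0 = 0. Then for every j ∈ ℤ/nℤ one has ∑_{i ∈ ℤ/nℤ} (a_i − a_{i+1})² ≥ 2·|a_j|. (Equivalently, a fibral divisor V = ∑ a_i v_i with zero coefficient on the identity component satisfies B(V,V) + 2a_j ≤ 0.) -/
/-! Going around the cycle, any two vertices `i` and `j` are joined by two complementary arcs. The
triangle inequality along each arc bounds `|a i - a j|` by the sum of the `|a k - a (k + 1)|` over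
that arc, and `|x| ≤ x ^ 2` for every integer `x`. -/

open Finset

theorem two_mul_dist_le_sum_range_dist {X : Type*} [PseudoMetricSpace X] {f : ℕ → X} {n m : ℕ}
    (hclosed : f n = f 0) (hmn : m ≤ n) :
    2 * dist (f 0) (f m) ≤ ∑ k ∈ range n, dist (f k) (f (k + 1)) :=
  calc 2 * dist (f 0) (f m) = dist (f 0) (f m) + dist (f m) (f n) := by
        rw [hclosed, dist_comm (f m), two_mul]
    _ ≤ ∑ k ∈ range m, dist (f k) (f (k + 1)) + ∑ k ∈ Ico m n, dist (f k) (f (k + 1)) :=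
        add_le_add (dist_le_range_sum_dist f m) (dist_le_Ico_sum_dist f hmn)
    _ = ∑ k ∈ range n, dist (f k) (f (k + 1)) := sum_range_add_sum_Ico _ hmn

theorem sum_zmod_eq_sum_range {M : Type*} [AddCommMonoid M] {n : ℕ} [NeZero n] (f : ZMod n → M) :
    ∑ i, f i = ∑ k ∈ range n, f k :=
  sum_bij' (fun i _ ↦ i.val) (fun k _ ↦ (k : ZMod n))
    (fun i _ ↦ mem_range.2 i.val_lt) (fun _ _ ↦ mem_univ _)
    (fun i _ ↦ i.natCast_zmod_val) (fun _ hk ↦ ZMod.val_cast_of_lt (mem_range.1 hk))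
    (fun i _ ↦ by rw [i.natCast_zmod_val])

theorem two_mul_dist_le_sum_zmod_dist {X : Type*} [PseudoMetricSpace X] {n : ℕ} [NeZero n]
    (f : ZMod n → X) (i j : ZMod n) :
    2 * dist (f i) (f j) ≤ ∑ k, dist (f k) (f (k + 1)) := by
  have arcs := two_mul_dist_le_sum_range_dist (f := fun k : ℕ ↦ f (i + k)) (by simp)
    (j - i).val_lt.le
  calc 2 * dist (f i) (f j) ≤ ∑ k ∈ range n, dist (f (i + k)) (f (i + k + 1)) := by
        simpa [add_assoc] using arcs
    _ = ∑ k, dist (f (i + k)) (f (i + k + 1)) :=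
        (sum_zmod_eq_sum_range fun k ↦ dist (f (i + k)) (f (i + k + 1))).symm
    _ = ∑ k, dist (f k) (f (k + 1)) :=
        Equiv.sum_comp (Equiv.addLeft i) fun k ↦ dist (f k) (f (k + 1))

theorem stmt_7_general (n : ℕ) [NeZero n] (a : ZMod n → ℤ) (i j : ZMod n) :
    2 * |a i - a j| ≤ ∑ k : ZMod n, (a k - a (k + 1)) ^ 2 :=
  calc 2 * |a i - a j| ≤ ∑ k, |a k - a (k + 1)| := by
        have arcs := two_mul_dist_le_sum_zmod_dist a i j
        simp only [Int.dist_eq] at arcs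
        exact_mod_cast arcs
    _ ≤ ∑ k, (a k - a (k + 1)) ^ 2 :=
        sum_le_sum fun k _ ↦
          (Int.natCast_natAbs _).ge.trans (Int.natAbs_le_self_sq (a k - a (k + 1)))

/-- for `n ≥ 3` and `a : ℤ/nℤ → ℤ` with `a 0 = 0`, for every `j` one has
`∑_{i ∈ ℤ/nℤ} (a_i − a_{i+1})² ≥ 2·|a_j|` (the sum being cyclic over all `i`). -/
theorem stmt_7 (n : ℕ) [NeZero n] (hn : 3 ≤ n) (a : ZMod n → ℤ) (h0 : a 0 = 0)
    (j : ZMod n) :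
    2 * |a j| ≤ ∑ i : ZMod n, (a i - a (i + 1)) ^ 2 := by
  simpa only [h0, sub_zero] using stmt_7_general n a j 0
end

section
/- In the symmetric group of permutations of ℤ/neℤ (with n ≥ 3, e ≥ 1), define P_k := ∏_{l=1}^{e} ((k−1)e+l, ke+l) for k ∈ ℤ/nℤ, a product of e disjoint transpositions. Then the P_k satisfy the Coxeter relations of the affine Weyl group of type Ã_{n−1}: P_k² = 1, (P_k·P_{k+1})³ = 1 for all k, and P_k·P_m = P_m·P_k whenever m ∉ {k−1, k, k+1} in ℤ/nℤ. -/
/-- `P_k = ∏_{l=1}^{e} ((k−1)e+l, ke+l)`, a product of `e` disjoint transpositions of `ℤ/Nℤ`. -/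
def Pperm (N : ℕ) (e : ℕ) (k : ℤ) : Equiv.Perm (ZMod N) :=
  ((List.range e).map
    (fun l => Equiv.swap (((k - 1) * (e : ℤ) + l + 1 : ℤ) : ZMod N)
                         ((k * (e : ℤ) + l + 1 : ℤ) : ZMod N))).prod

/-!
Arrange `ℤ/neℤ` as an `e × n` array whose entry in row `l` and column `k` is `ke + l + 1`, where
`0 ≤ l < e`. Then `P_k` exchanges the columns `k - 1` and `k`, so it is the image of the
transposition `(k - 1, k)` under a group homomorphism from the permutations of `ℤ/nℤ` to those of
`ℤ/neℤ`. The relations already hold between the transpositions of `ℤ/nℤ`.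
-/

open Equiv

section Transpositions

variable {α : Type*} [DecidableEq α]

theorem swap_mul_swap_pow_three {a b c : α} (hab : a ≠ b) (hac : a ≠ c) (hbc : b ≠ c) :
    (swap a b * swap b c) ^ 3 = 1 := by
  have conj_eq : swap a b * swap b c * swap a b = swap a c := by
    simpa only [swap_comm b a, swap_comm c b] using swap_mul_swap_mul_swap hbc.symm hac.symm
  calc (swap a b * swap b c) ^ 3
      = swap a b * swap b c * swap a b * (swap b c * swap a b * swap b c) := by
        simp only [pow_three, mul_assoc]
    _ = swap a c * swap c a := by rw [conj_eq, swap_mul_swap_mul_swap hab hac]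
    _ = 1 := by rw [swap_comm c a, swap_mul_self]

theorem commute_swap_swap {a b c d : α} (hac : a ≠ c) (had : a ≠ d) (hbc : b ≠ c) (hbd : b ≠ d) :
    Commute (swap a b) (swap c d) :=
  Perm.Disjoint.commute fun _ => by grind

variable {G : Type*} [AddGroup G] [DecidableEq G] {g : G}

theorem swap_sub_mul_swap_add_pow_three (hg : g + g ≠ 0) (x : G) :
    (swap (x - g) x * swap x (x + g)) ^ 3 = 1 := by
  have hg₀ : g ≠ 0 := by rintro rfl; simp at hg
  refine swap_mul_swap_pow_three (by simpa using hg₀) (fun h => hg ?_) (by simpa using hg₀)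
  rwa [sub_eq_iff_eq_add, add_assoc, left_eq_add] at h

theorem commute_swap_sub_swap_sub {x y : G} (hsub : y ≠ x - g) (hne : y ≠ x) (hadd : y ≠ x + g) :
    Commute (swap (x - g) x) (swap (y - g) y) := by
  refine commute_swap_swap (fun h => hne ?_) hsub.symm (fun h => hadd ?_) hne.symm
  · exact (sub_left_injective h).symm
  · exact (eq_sub_iff_add_eq.mp h).symm

end Transpositions

section Rows

variable {ι α β : Type*}

/-- The diagonal action of `Perm α` on the rows of `ι × α`, as a homomorphism. It transports
relations between permutations of one row to permutations of the whole array. -/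
def rowwisePermHom (ι α : Type*) : Perm α →* Perm (ι × α) where
  toFun σ := prodCongrRight fun _ => σ
  map_one' := rfl
  map_mul' _ _ := rfl

variable [DecidableEq α]

theorem prodExtendRight_swap [DecidableEq ι] (i : ι) (a b : α) :
    Perm.prodExtendRight i (swap a b) = swap (i, a) (i, b) := by
  ext1 ⟨j, x⟩
  obtain rfl | hji := eq_or_ne j i
  · rw [Perm.prodExtendRight_apply_eq, ← (Prod.mk_right_injective j).map_swap]
  · rw [Perm.prodExtendRight_apply_ne _ hji, swap_apply_of_ne_of_ne] <;> simp [hji]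

theorem prod_map_swap_eq_permCongrHom_rowwisePermHom [DecidableEq β] (f : ι × α ≃ β)
    {l : List ι} (hl : l.Nodup) (mem_l : ∀ i, i ∈ l) (a b : α) :
    (l.map fun i => swap (f (i, a)) (f (i, b))).prod =
      f.permCongrHom (rowwisePermHom ι α (swap a b)) := by
  classical
  have swap_eq (i : ι) :
      swap (f (i, a)) (f (i, b)) = f.permCongrHom (Perm.prodExtendRight i (swap a b)) := by
    rw [prodExtendRight_swap]
    exact (symm_trans_swap_trans _ _ f).symm
  have prod_eq : (l.map fun i => Perm.prodExtendRight i (swap a b)).prod =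
      rowwisePermHom ι α (swap a b) :=
    Perm.prod_prodExtendRight (fun _ => swap a b) hl mem_l
  simp only [swap_eq, ← prod_eq, map_list_prod, List.map_map, Function.comp_def]

end Rows

section Array

/-- The residue `ke + l + 1` of `ℤ/neℤ` in row `l` and column `k` of the array. -/
def arrayEntry (n e : ℕ) (p : Fin e × ZMod n) : ZMod (n * e) :=
  ZMod.lift n ⟨zmultiplesHom _ (e : ZMod (n * e)), by simp [← Nat.cast_mul]⟩ p.2 + (p.1 : ℕ) + 1

theorem arrayEntry_intCast (n e : ℕ) (l : Fin e) (k : ℤ) :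
    arrayEntry n e (l, k) = ((k * e + (l : ℕ) + 1 : ℤ) : ZMod (n * e)) := by
  simp [arrayEntry]

theorem arrayEntry_injective (n e : ℕ) : Function.Injective (arrayEntry n e) := by
  rintro ⟨l, x⟩ ⟨l', x'⟩ h
  obtain ⟨k, rfl⟩ := ZMod.intCast_surjective x
  obtain ⟨k', rfl⟩ := ZMod.intCast_surjective x'
  rw [arrayEntry_intCast, arrayEntry_intCast, ZMod.intCast_eq_intCast_iff_dvd_sub] at h
  obtain ⟨c, hc⟩ := h
  have : NeZero e := ⟨l.pos.ne'⟩
  have divMod_eq : (Int.divModEquiv e).symm (k', l') = (Int.divModEquiv e).symm (k + n * c, l) := by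
    simp only [Int.divModEquiv_symm_apply]
    push_cast at hc
    linarith
  obtain ⟨rfl, rfl⟩ := Prod.mk.inj ((Int.divModEquiv e).symm.injective divMod_eq)
  simp

theorem arrayEntry_surjective (n e : ℕ) [NeZero e] : Function.Surjective (arrayEntry n e) := by
  intro x
  obtain ⟨z, rfl⟩ := ZMod.intCast_surjective x
  obtain ⟨⟨k, l⟩, hkl⟩ := (Int.divModEquiv e).symm.surjective (z - 1)
  refine ⟨(l, k), ?_⟩
  rw [arrayEntry_intCast, eq_add_of_sub_eq hkl.symm, Int.divModEquiv_symm_apply]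

/-- The identification of `ℤ/neℤ` with the array, whose rows are indexed by `Fin e` and whose
columns are indexed by `ZMod n`. -/
noncomputable def arrayEquiv (n e : ℕ) [NeZero e] : Fin e × ZMod n ≃ ZMod (n * e) :=
  Equiv.ofBijective (arrayEntry n e) ⟨arrayEntry_injective n e, arrayEntry_surjective n e⟩

/-- The homomorphism `Perm (ℤ/nℤ) → Perm (ℤ/neℤ)` permuting the columns of the array, which sends
the transposition `(k - 1, k)` to `P_k`. -/
noncomputable def columnPermHom (n e : ℕ) [NeZero e] : Perm (ZMod n) →* Perm (ZMod (n * e)) :=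
  (arrayEquiv n e).permCongrHom.toMonoidHom.comp (rowwisePermHom (Fin e) (ZMod n))

theorem columnPermHom_swap (n e : ℕ) [NeZero e] (k : ℤ) :
    columnPermHom n e (swap ((k : ZMod n) - 1) k) = Pperm (n * e) e k := by
  have entry (l : Fin e) (j : ℤ) :
      arrayEquiv n e (l, (j : ZMod n)) = ((j * e + (l : ℕ) + 1 : ℤ) : ZMod (n * e)) :=
    arrayEntry_intCast n e l j
  rw [← Int.cast_one, ← Int.cast_sub, columnPermHom, MonoidHom.comp_apply]
  refine (prod_map_swap_eq_permCongrHom_rowwisePermHom (arrayEquiv n e)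
    (List.nodup_finRange e) List.mem_finRange _ _).symm.trans ?_
  -- In `Pperm` the index `l` ranges over `ℤ`: the list is `List.range e` cast by a monadic bind.
  simp only [entry, Pperm, ← List.map_coe_finRange_eq_range, bind_pure_comp, List.map_eq_map,
    List.map_map, Function.comp_def]

end Array

/-- the permutations `P_k`, `k ∈ ℤ/nℤ`, of `ℤ/neℤ` satisfy the Coxeter
relations of the affine Weyl group of type `Ã_{n−1}`: `P_k² = 1`, `(P_k·P_{k+1})³ = 1`,
and `P_k·P_m = P_m·P_k` whenever `m ∉ {k−1, k, k+1}` in `ℤ/nℤ`. -/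
theorem stmt_16 (n e : ℕ) (hn : 3 ≤ n) (he : 1 ≤ e) :
    (∀ k : ℤ, (Pperm (n * e) e k) ^ 2 = 1) ∧
    (∀ k : ℤ, (Pperm (n * e) e k * Pperm (n * e) e (k + 1)) ^ 3 = 1) ∧
    (∀ k m : ℤ,
      (m : ZMod n) ≠ (k : ZMod n) - 1 → (m : ZMod n) ≠ (k : ZMod n) →
        (m : ZMod n) ≠ (k : ZMod n) + 1 →
      Pperm (n * e) e k * Pperm (n * e) e m = Pperm (n * e) e m * Pperm (n * e) e k) := by
  have : NeZero e := ⟨by omega⟩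
  have one_add_one_ne : (1 + 1 : ZMod n) ≠ 0 := by
    rw [one_add_one_eq_two, ← Nat.cast_ofNat, Ne, ZMod.natCast_eq_zero_iff]
    exact Nat.not_dvd_of_pos_of_lt two_pos hn
  simp only [← columnPermHom_swap, Int.cast_add, Int.cast_one, add_sub_cancel_right, ← map_mul,
    ← map_pow]
  refine ⟨fun k => ?_, fun k => ?_, fun k m hsub hne hadd => ?_⟩
  · rw [sq, swap_mul_self, map_one]
  · rw [swap_sub_mul_swap_add_pow_three one_add_one_ne, map_one]
  · rw [(commute_swap_sub_swap_sub hsub hne hadd).eq]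
end

section
/- In the symmetric group of permutations of ℤ/neℤ (with n ≥ 3, e ≥ 1), fix j ∈ ℤ/nℤ and define U(j,0) := (je, je+1), U(j,i) := (je−i, je−i+1)·(je+i, je+i+1) for 1 ≤ i < e, T(j,i) := U(j,0)·U(j,1)⋯U(j,i), and S(j,i) := T(j,i−1)·T(j,i−2)⋯T(j,0). Then for every k with 1 ≤ k ≤ e, S(j,k) = (je−k+1, je+1)·(je−k+2, je+2)⋯(je, je+k), a product of k disjoint transpositions. -/
/-- `U(j,0) = (je, je+1)` and `U(j,i) = (je−i, je−i+1)·(je+i, je+i+1)` for `i ≥ 1`,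
as permutations of `ℤ/Nℤ`; here `c` stands for `je`. -/
def Uperm (N : ℕ) (c : ℤ) : ℕ → Equiv.Perm (ZMod N)
  | 0 => Equiv.swap ((c : ℤ) : ZMod N) ((c + 1 : ℤ) : ZMod N)
  | i + 1 =>
      Equiv.swap ((c - (i + 1) : ℤ) : ZMod N) ((c - (i + 1) + 1 : ℤ) : ZMod N) *
        Equiv.swap ((c + (i + 1) : ℤ) : ZMod N) ((c + (i + 1) + 1 : ℤ) : ZMod N)

/-- `T(j,i) = U(j,0)·U(j,1)⋯U(j,i)`. -/
def Tperm (N : ℕ) (c : ℤ) : ℕ → Equiv.Perm (ZMod N)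
  | 0 => Uperm N c 0
  | i + 1 => Tperm N c i * Uperm N c (i + 1)

/-- `S(j,i) = T(j,i−1)·T(j,i−2)⋯T(j,0)` (with `S(j,0) = 1`). -/
def Sperm (N : ℕ) (c : ℤ) : ℕ → Equiv.Perm (ZMod N)
  | 0 => 1
  | i + 1 => Tperm N c i * Sperm N c i

/-! Label the residues by a transversal of `ℤ → ℤ/Nℤ` that contains the `2k` integers
`c - k + 1, …, c + k`. On labels, `T(j,i)` is the cycle
`c + 1 → c + 2 → ⋯ → c + i + 1 → c → c - 1 → ⋯ → c - i → c + 1`. If `S(j,k)` exchanges the blocks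
`(c - k, c]` and `(c, c + k]` by the translation by `k`, then following it with the cycle `T(j,k)`
moves each image one step further outwards, and sends `c - k` and `c + k + 1` to `c + 1` and `c`:
the result exchanges `(c - k - 1, c]` and `(c, c + k + 1]` by the translation by `k + 1`. -/

open Equiv Set

theorem swap_apply_mem {α : Type*} [DecidableEq α] {s : Set α} {a b x : α}
    (ha : a ∈ s) (hb : b ∈ s) (hx : x ∈ s) : swap a b x ∈ s := by
  grind

theorem map_swap_of_injOn {α β : Type*} [DecidableEq α] [DecidableEq β] {f : α → β} {s : Set α}
    (hf : s.InjOn f) {a b x : α} (ha : a ∈ s) (hb : b ∈ s) (hx : x ∈ s) :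
    f (swap a b x) = swap (f a) (f b) (f x) := by
  simp only [swap_apply_def, hf.eq_iff hx ha, hf.eq_iff hx hb, apply_ite f]

/-- The cycle `c + 1 → c + 2 → ⋯ → c + i + 1 → c → c - 1 → ⋯ → c - i → c + 1` on the integers,
which describes the permutation `Tperm N c i` on representatives. -/
def outwardCycle (c i m : ℤ) : ℤ :=
  if m = c + i + 1 then c
  else if m = c - i then c + 1
  else if c < m ∧ m ≤ c + i then m + 1
  else if c - i < m ∧ m ≤ c then m - 1
  else m

/-- The involution of the integers exchanging the block `[a, a + p)` with its translate by `d`.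
It is meaningful for `p ≤ d`, when the two blocks are disjoint. -/
def blockSwap (a d p m : ℤ) : ℤ :=
  if a ≤ m ∧ m < a + p then m + d
  else if a + d ≤ m ∧ m < a + d + p then m - d
  else m

theorem outwardCycle_zero (c m : ℤ) : outwardCycle c 0 m = swap c (c + 1) m := by
  grind [outwardCycle]

theorem outwardCycle_swap_swap {i : ℤ} (hi : 0 ≤ i) (c m : ℤ) :
    outwardCycle c i (swap (c - (i + 1)) (c - (i + 1) + 1)
      (swap (c + (i + 1)) (c + (i + 1) + 1) m)) = outwardCycle c (i + 1) m := by
  grind [outwardCycle]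

theorem blockSwap_zero (a d m : ℤ) : blockSwap a d 0 m = m := by
  grind [blockSwap]

theorem blockSwap_swap {d p : ℤ} (hp : 0 ≤ p) (hpd : p < d) (a m : ℤ) :
    blockSwap a d p (swap (a + p) (a + d + p) m) = blockSwap a d (p + 1) m := by
  grind [blockSwap]

theorem outwardCycle_blockSwap {k : ℤ} (hk : 0 ≤ k) (c m : ℤ) :
    outwardCycle c k (blockSwap (c - k + 1) k k m) =
      blockSwap (c - (k + 1) + 1) (k + 1) (k + 1) m := by
  grind [outwardCycle, blockSwap]

theorem blockSwap_mem {W : Set ℤ} {a d p m : ℤ} (hlow : Ico a (a + p) ⊆ W)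
    (hhigh : Ico (a + d) (a + d + p) ⊆ W) (hm : m ∈ W) : blockSwap a d p m ∈ W := by
  unfold blockSwap
  split_ifs
  · exact hhigh ⟨by linarith, by linarith⟩
  · exact hlow ⟨by linarith, by linarith⟩
  · exact hm

theorem prod_map_swap_apply {α : Type*} [DecidableEq α] {f : ℤ → α} {W : Set ℤ} (hf : W.InjOn f)
    {a d m : ℤ} {p : ℕ} (hpd : p ≤ d) (hlow : Ico a (a + p) ⊆ W)
    (hhigh : Ico (a + d) (a + d + p) ⊆ W) (hm : m ∈ W) :
    ((List.range p).map fun l : ℕ ↦ swap (f (a + l)) (f (a + d + l))).prod (f m) =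
      f (blockSwap a d p m) := by
  induction p generalizing m with
  | zero => simp only [List.range_zero, List.map_nil, List.prod_nil, Perm.one_apply,
      Nat.cast_zero, blockSwap_zero]
  | succ p ih =>
    push_cast at hpd hlow hhigh
    have ha : a + p ∈ W := hlow ⟨by lia, by lia⟩
    have had : a + d + p ∈ W := hhigh ⟨by lia, by lia⟩
    rw [List.range_succ, List.map_append, List.prod_append, List.map_singleton,
      List.prod_singleton, Perm.mul_apply, ← map_swap_of_injOn hf ha had hm,
      ih (by lia) ((Ico_subset_Ico_right (by lia)).trans hlow)
        ((Ico_subset_Ico_right (by lia)).trans hhigh) (swap_apply_mem ha had hm),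
      blockSwap_swap (by lia) (by lia), Nat.cast_succ]

section Lift

variable {N : ℕ} {W : Set ℤ} (hW : W.InjOn (Int.cast : ℤ → ZMod N))

include hW

theorem Tperm_intCast {c m : ℤ} {i : ℕ} (hi : Icc (c - i) (c + i + 1) ⊆ W) (hm : m ∈ W) :
    Tperm N c i (m : ZMod N) = (outwardCycle c i m : ℤ) := by
  induction i generalizing m with
  | zero =>
    have hc : c ∈ W := hi (by simp)
    have hc' : c + 1 ∈ W := hi (by simp)
    simp only [Tperm, Uperm, Nat.cast_zero, outwardCycle_zero, map_swap_of_injOn hW hc hc' hm]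
  | succ i ih =>
    push_cast at hi
    have hlow : c - (i + 1) ∈ W := hi ⟨by lia, by lia⟩
    have hlow' : c - (i + 1) + 1 ∈ W := hi ⟨by lia, by lia⟩
    have hhigh : c + (i + 1) ∈ W := hi ⟨by lia, by lia⟩
    have hhigh' : c + (i + 1) + 1 ∈ W := hi ⟨by lia, by lia⟩
    have hm' := swap_apply_mem hhigh hhigh' hm
    rw [Tperm, Uperm, Perm.mul_apply, Perm.mul_apply, ← map_swap_of_injOn hW hhigh hhigh' hm,
      ← map_swap_of_injOn hW hlow hlow' hm',
      ih ((Icc_subset_Icc (by lia) (by lia)).trans hi) (swap_apply_mem hlow hlow' hm'),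
      outwardCycle_swap_swap (by lia), Nat.cast_succ]

theorem Sperm_intCast {c m : ℤ} {k : ℕ} (hk : Ioc (c - k) (c + k) ⊆ W) (hm : m ∈ W) :
    Sperm N c k (m : ZMod N) = (blockSwap (c - k + 1) k k m : ℤ) := by
  induction k with
  | zero => simp only [Sperm, Perm.one_apply, Nat.cast_zero, blockSwap_zero]
  | succ k ih =>
    push_cast at hk
    have hblock : blockSwap (c - k + 1) k k m ∈ W :=
      blockSwap_mem (fun x ⟨_, _⟩ ↦ hk ⟨by lia, by lia⟩) (fun x ⟨_, _⟩ ↦ hk ⟨by lia, by lia⟩) hm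
    have hcycle : Icc (c - k) (c + k + 1) ⊆ W := fun x ⟨_, _⟩ ↦ hk ⟨by lia, by lia⟩
    rw [Sperm, Perm.mul_apply, ih ((Ioc_subset_Ioc (by lia) (by lia)).trans hk),
      Tperm_intCast hW hcycle hblock, outwardCycle_blockSwap (by lia), Nat.cast_succ]

end Lift

theorem injOn_intCast_Ioc {R : Type*} [AddGroupWithOne R] {N : ℕ} [CharP R N] {a b : ℤ}
    (h : b - a ≤ N) : (Ioc a b).InjOn (Int.cast : ℤ → R) := by
  intro x ⟨_, _⟩ y ⟨_, _⟩ hxy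
  have hdvd : (N : ℤ) ∣ y - x := ((CharP.intCast_eq_intCast R N).mp hxy).dvd
  have hzero : y - x = 0 := Int.eq_zero_of_abs_lt_dvd hdvd (abs_lt.mpr ⟨by lia, by lia⟩)
  lia

theorem stmt_17_general (N : ℕ) (c : ℤ) (k : ℕ)
    (hinj : (Ioc (c - k) (c + k)).InjOn (Int.cast : ℤ → ZMod N)) :
    Sperm N c k = ((List.range k).map fun l : ℕ ↦
      swap ((c - k + l + 1 : ℤ) : ZMod N) ((c + l + 1 : ℤ) : ZMod N)).prod := by
  obtain ⟨W, hblocks, hW⟩ := hinj.bijOn_image.exists_extend (subset_univ _)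
    (ZMod.intCast_surjective.range_eq.ge)
  ext x
  obtain ⟨m, hm, rfl⟩ := hW.surjOn (mem_univ x)
  have hprod := prod_map_swap_apply hW.injOn (a := c - k + 1) (p := k) le_rfl
    (fun x ⟨_, _⟩ ↦ hblocks ⟨by lia, by lia⟩) (fun x ⟨_, _⟩ ↦ hblocks ⟨by lia, by lia⟩) hm
  rw [Sperm_intCast hW.injOn hblocks hm, ← hprod]
  congr! 6 <;> ring

/-- for `1 ≤ k ≤ e`,
`S(j,k) = (je−k+1, je+1)·(je−k+2, je+2)⋯(je, je+k)`, a product of `k` disjoint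
transpositions of `ℤ/neℤ`. -/
theorem stmt_17 (n e : ℕ) (hn : 3 ≤ n) (he : 1 ≤ e) (j : ℤ) (k : ℕ)
    (hk1 : 1 ≤ k) (hke : k ≤ e) :
    Sperm (n * e) (j * (e : ℤ)) k =
      ((List.range k).map
        (fun l => Equiv.swap ((j * (e : ℤ) - k + l + 1 : ℤ) : ZMod (n * e))
                             ((j * (e : ℤ) + l + 1 : ℤ) : ZMod (n * e)))).prod := by
  have hwidth : (2 * k : ℤ) ≤ (n * e : ℕ) := by exact_mod_cast Nat.mul_le_mul (by lia) hke
  simpa [Function.comp_def, ← List.map_eq_flatMap] using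
    stmt_17_general (n * e) (j * e) k (injOn_intCast_Ioc (N := n * e) (by lia))
end
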